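/- arXiv:2405.18121 — 9 statements merged into one kernel-verified Lean document; each statement's English description precedes it below -/
import Mathlib

section
/- Let L/K be a finite Galois field extension of degree n with Galois group G = {σ₁, ..., σₙ}, let x₁, ..., xₙ be a K-basis of L, and let B be the n × n matrix with (i,j) entry σⱼ(xᵢ). If K has characteristic 2, or if the Sylow 2-subgroup of G is not cyclic, then det B ∈ K. -/
theorem cycleType_mulLeft_aux {G : Type*} [Group G] [Fintype G] [DecidableEq G] (h : G)
    (m : ℕ) (hm : m ∈ (Equiv.mulLeft h).cycleType) : m = orderOf h := by
  apply Nat.dvd_antisymm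
  · have h1 := Equiv.Perm.dvd_of_mem_cycleType hm
    refine h1.trans (orderOf_dvd_of_pow_eq_one ?_)
    ext y
    simp [Equiv.pow_mulLeft, pow_orderOf_eq_one]
  · rw [Equiv.Perm.cycleType_def, Multiset.mem_map] at hm
    obtain ⟨c, hc, rfl⟩ := hm
    have hc' : c ∈ (Equiv.mulLeft h).cycleFactorsFinset := hc
    rw [Equiv.Perm.mem_cycleFactorsFinset_iff] at hc'
    obtain ⟨hcyc, hag⟩ := hc'
    obtain ⟨y, hy⟩ := hcyc.nonempty_support
    have key : ∀ k : ℕ, (c ^ k) y = h ^ k * y := by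
      intro k
      induction k with
      | zero => simp
      | succ k ih =>
        have : (c ^ k) y ∈ c.support := Equiv.Perm.pow_apply_mem_support.mpr hy
        rw [pow_succ', Equiv.Perm.mul_apply, hag _ this, ih, pow_succ']
        simp [mul_assoc]
    have h2 := key (orderOf c)
    rw [pow_orderOf_eq_one, hcyc.orderOf] at h2
    simp at h2
    exact orderOf_dvd_of_pow_eq_one h2

theorem sign_mulLeft_aux {G : Type*} [Group G] [Fintype G] [DecidableEq G]
    (hS : ∀ P : Sylow 2 G, ¬ IsCyclic P) (g : G) :
    Equiv.Perm.sign (Equiv.mulLeft g) = 1 := by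
  by_contra hne
  have hpow : ∀ (a : G) (k : ℕ), Equiv.Perm.sign (Equiv.mulLeft (a ^ k)) =
      Equiv.Perm.sign (Equiv.mulLeft a) ^ k := by
    intro a k
    rw [← map_pow, Equiv.pow_mulLeft]
  have hg : Equiv.Perm.sign (Equiv.mulLeft g) = -1 :=
    (Int.units_eq_one_or _).resolve_left hne
  obtain ⟨a, b, hb, hab⟩ := Nat.exists_eq_two_pow_mul_odd (orderOf_pos g).ne'
  set h := g ^ b with hh
  have hsh : Equiv.Perm.sign (Equiv.mulLeft h) = -1 := by
    rw [hh, hpow, hg, hb.neg_one_pow]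
  have hh2 : h ^ 2 ^ a = 1 := by
    rw [hh, ← pow_mul, mul_comm, ← hab, pow_orderOf_eq_one]
  have hp : IsPGroup 2 (Subgroup.zpowers h) := by
    apply IsPGroup.of_card (n := Nat.log 2 (orderOf h))
    rw [Nat.card_zpowers]
    obtain ⟨c, -, hc⟩ := (Nat.dvd_prime_pow Nat.prime_two).1 (orderOf_dvd_of_pow_eq_one hh2)
    rw [hc, Nat.log_pow (by norm_num)]
  have hh1 : h ≠ 1 := by
    intro h1
    rw [h1] at hsh
    have : (Equiv.mulLeft (1 : G)) = 1 := by ext; simp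
    rw [this] at hsh
    simp at hsh
  have hrep := Multiset.eq_replicate_card.2 (cycleType_mulLeft_aux h)
  have hsum : (Equiv.mulLeft h).cycleType.sum = Fintype.card G := by
    rw [Equiv.Perm.sum_cycleType, ← Finset.card_univ]
    congr 1
    ext y
    simp [hh1]
  set k := (Equiv.mulLeft h).cycleType.card with hk
  have hcard : k * orderOf h = Nat.card G := by
    rw [Nat.card_eq_fintype_card, ← hsum, hrep, Multiset.sum_replicate, smul_eq_mul]
  have heven : Even (orderOf h) := by
    obtain ⟨c, -, hc⟩ := (Nat.dvd_prime_pow Nat.prime_two).1 (orderOf_dvd_of_pow_eq_one hh2)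
    rw [hc]
    refine (Nat.even_pow.2 ⟨even_two, ?_⟩)
    rintro rfl
    exact hh1 (orderOf_eq_one_iff.1 (by simpa using hc))
  have hidx : (Subgroup.zpowers h).index = k := by
    have := (Subgroup.zpowers h).index_mul_card
    rw [Nat.card_zpowers, ← hcard] at this
    exact Nat.eq_of_mul_eq_mul_right (orderOf_pos h) this
  have hodd : ¬ 2 ∣ (Subgroup.zpowers h).index := by
    rw [hidx]
    intro hd
    have hs := Equiv.Perm.sign_of_cycleType (Equiv.mulLeft h)
    rw [hsum, ← Nat.card_eq_fintype_card, ← hcard, ← hk, hsh, Even.neg_one_pow] at hs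
    · exact absurd hs (by decide)
    · exact (heven.mul_left k).add (even_iff_two_dvd.2 hd)
  haveI : Fact (Nat.Prime 2) := ⟨Nat.prime_two⟩
  refine hS (hp.toSylow hodd) ?_
  change IsCyclic (Subgroup.zpowers h)
  infer_instance

/-- Let L/K be a finite Galois extension of degree n with Galois group G
enumerated by σ, let x₁, ..., xₙ be a K-basis of L and B the matrix with
(i,j) entry σⱼ(xᵢ). If K has characteristic 2, or the Sylow 2-subgroup of G
is not cyclic, then det B lies in (the image of) K. -/
theorem stmt8 (K L : Type*) [Field K] [Field L] [Algebra K L]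
    [FiniteDimensional K L] [IsGalois K L]
    (n : ℕ) (hn : Module.finrank K L = n) (σ : Fin n ≃ (L ≃ₐ[K] L))
    (x : Module.Basis (Fin n) K L)
    (h : ringChar K = 2 ∨ ∀ P : Sylow 2 (L ≃ₐ[K] L), ¬ IsCyclic P) :
    (Matrix.of fun i j : Fin n => σ j (x i)).det ∈ (algebraMap K L).range := by
  classical
  refine (IsGalois.mem_range_algebraMap_iff_fixed (F := K) (E := L) _).2 ?_
  intro τ
  set B : Matrix (Fin n) (Fin n) L := Matrix.of fun i j : Fin n => σ j (x i) with hB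
  let π : Equiv.Perm (Fin n) := σ.symm.permCongr (Equiv.mulLeft τ)
  have h1 : τ B.det = (B.submatrix id π).det := by
    rw [AlgEquiv.map_det]
    congr 1
    ext i j
    simp [hB, π, Equiv.permCongr_apply]
  rw [h1, Matrix.det_permute']
  have h2 : ((Equiv.Perm.sign π : ℤ) : L) = 1 := by
    rcases h with h | h
    · haveI : CharP K 2 := h ▸ ringChar.charP K
      haveI : CharP L 2 := charP_of_injective_algebraMap (algebraMap K L).injective 2
      rcases Int.units_eq_one_or (Equiv.Perm.sign π) with e | e
      · simp [e]
      · simp [e, CharTwo.neg_eq]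
    · have : Equiv.Perm.sign π = 1 := by
        simp only [π, Equiv.Perm.sign_permCongr]
        exact sign_mulLeft_aux h τ
      simp [this]
  rw [h2, one_mul]
end

section
/- Let L/K be a finite Galois field extension of degree n with Galois group G = {σ₁, ..., σₙ}, let x₁, ..., xₙ be a K-basis of L, and let B be the n × n matrix with (i,j) entry σⱼ(xᵢ). If K has characteristic different from 2 and G has a cyclic Sylow 2-subgroup of order at least 2, then det B = μα, where μ ∈ K, α ∈ L satisfies α² ∈ K, and K(α) is the unique quadratic extension of K contained in L. -/
theorem sign_odd_aux {G : Type*} [Group G] [Fintype G] [DecidableEq G] (g : G) (m q : ℕ)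
    (hm : orderOf g = m) (hm2 : 2 ∣ m) (hq : Odd q) (hc : Fintype.card G = m * q) :
    Equiv.Perm.sign (Equiv.mulLeft g) = -1 := by
  have hpow : ∀ (k : ℕ) (y : G), ((Equiv.mulLeft g) ^ k) y = g ^ k * y := by
    intro k y
    induction k with
    | zero => simp
    | succ k ih => rw [pow_succ', Equiv.Perm.mul_apply, ih, pow_succ']; simp [mul_assoc]
  have hmpos : 0 < m := hm ▸ orderOf_pos g
  have hall : ∀ c ∈ (Equiv.mulLeft g).cycleType, c = m := by
    intro c hcm
    apply Nat.dvd_antisymm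
    · refine (Equiv.Perm.dvd_of_mem_cycleType hcm).trans ?_
      apply orderOf_dvd_of_pow_eq_one
      ext y
      rw [hpow, ← hm, pow_orderOf_eq_one]; simp
    · rw [Equiv.Perm.cycleType_def, Multiset.mem_map] at hcm
      obtain ⟨p, hp, rfl⟩ := hcm
      have hp' : p ∈ (Equiv.mulLeft g).cycleFactorsFinset := hp
      obtain ⟨hcyc, hag⟩ := Equiv.Perm.mem_cycleFactorsFinset_iff.mp hp'
      obtain ⟨y, hy⟩ := hcyc.nonempty_support
      have hk : ∀ k : ℕ, (p ^ k) y = g ^ k * y ∧ (p^k) y ∈ p.support := by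
        intro k
        induction k with
        | zero => simpa using hy
        | succ k ih =>
          have h1 : (p ^ (k+1)) y = p ((p^k) y) := by rw [pow_succ', Equiv.Perm.mul_apply]
          refine ⟨?_, ?_⟩
          · rw [h1, hag _ ih.2, ih.1, pow_succ']; simp [mul_assoc]
          · rw [h1]; exact Equiv.Perm.apply_mem_support.mpr ih.2
      have := (hk p.support.card).1
      rw [← hcyc.orderOf, pow_orderOf_eq_one] at this
      rw [← hm]
      simp only [Function.comp]
      rw [← hcyc.orderOf]
      apply orderOf_dvd_of_pow_eq_one
      simpa using this.symm
  have hrep := Multiset.eq_replicate_card.mpr hall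
  have hsum : (Equiv.mulLeft g).cycleType.sum = m * q := by
    rw [Equiv.Perm.sum_cycleType, ← hc, ← Finset.card_univ]
    congr 1
    ext y
    simp only [Equiv.Perm.mem_support, Finset.mem_univ, iff_true]
    intro h
    have : g = 1 := by simpa using h
    rw [this, orderOf_one] at hm
    omega
  have hcard : (Equiv.mulLeft g).cycleType.card = q := by
    have h2 := hsum
    rw [hrep, Multiset.sum_replicate, smul_eq_mul, mul_comm] at h2
    exact Nat.eq_of_mul_eq_mul_left hmpos h2
  rw [Equiv.Perm.sign_of_cycleType, hsum, hcard]
  apply Odd.neg_one_pow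
  exact Even.add_odd ((even_iff_two_dvd.mpr hm2).mul_right q) hq

open Polynomial in
theorem deg_le_two_aux {K L : Type*} [Field K] [Field L] [Algebra K L] [FiniteDimensional K L]
    (γ : L) (h : γ ^ 2 ∈ (algebraMap K L).range) :
    Module.finrank K (IntermediateField.adjoin K {γ}) ≤ 2 := by
  obtain ⟨a, ha⟩ := h
  rw [IntermediateField.adjoin.finrank (Algebra.IsIntegral.isIntegral γ)]
  have hd : minpoly K γ ∣ X ^ 2 - C a := minpoly.dvd _ _ (by simp [ha])
  calc _ ≤ (X ^ 2 - C a : K[X]).natDegree := natDegree_le_of_dvd hd (X_pow_sub_C_ne_zero two_pos a)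
    _ = 2 := natDegree_X_pow_sub_C

theorem mem_range_of_finrank_one {K L : Type*} [Field K] [Field L] [Algebra K L] (γ : L)
    (h : Module.finrank K (IntermediateField.adjoin K {γ}) = 1) : γ ∈ (algebraMap K L).range := by
  rw [IntermediateField.finrank_adjoin_simple_eq_one_iff, IntermediateField.mem_bot] at h
  exact h

theorem mem_of_odd_aux {K L : Type*} [Field K] [Field L] [Algebra K L] [FiniteDimensional K L]
    (E : IntermediateField K L) (hE : Odd (Module.finrank K E))
    (γ : L) (h : γ ^ 2 ∈ (algebraMap K L).range) (hγ : γ ∈ E) : γ ∈ (algebraMap K L).range := by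
  apply mem_range_of_finrank_one
  have h2 := deg_le_two_aux γ h
  have hle : IntermediateField.adjoin K {γ} ≤ E := by
    rw [IntermediateField.adjoin_simple_le_iff]; exact hγ
  have hdvd := IntermediateField.finrank_dvd_of_le_right hle
  have ho := hE.of_dvd_nat hdvd
  obtain ⟨k, hk⟩ := ho
  omega

open Polynomial in
theorem quad_aux {K L : Type*} [Field K] [Field L] [Algebra K L] [FiniteDimensional K L]
    (F : IntermediateField K L) (hF : Module.finrank K F = 2) (y : L) (hy : y ∈ F) :
    y ∈ (algebraMap K L).range ∨ ∃ b : K, (2 * y + algebraMap K L b) ^ 2 ∈ (algebraMap K L).range := by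
  have hle : IntermediateField.adjoin K {y} ≤ F := by
    rw [IntermediateField.adjoin_simple_le_iff]; exact hy
  have hdvd := IntermediateField.finrank_dvd_of_le_right hle
  rw [hF] at hdvd
  rcases (Nat.dvd_prime Nat.prime_two).mp hdvd with h1 | h2
  · exact Or.inl (mem_range_of_finrank_one y h1)
  · right
    have hint : IsIntegral K y := Algebra.IsIntegral.isIntegral y
    rw [IntermediateField.adjoin.finrank hint] at h2
    have hmon := minpoly.monic hint
    have hev := minpoly.aeval K y
    rw [aeval_eq_sum_range, h2] at hev
    simp only [Finset.sum_range_succ, Finset.sum_range_zero] at hev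
    have hl : (minpoly K y).coeff 2 = 1 := by rw [← h2]; exact hmon
    rw [hl] at hev
    simp only [Algebra.smul_def, map_one] at hev
    refine ⟨(minpoly K y).coeff 1, (minpoly K y).coeff 1 ^ 2 - 4 * (minpoly K y).coeff 0, ?_⟩
    simp only [map_sub, map_mul, map_pow, map_ofNat]
    linear_combination (-4) * hev

theorem det_sq_aux {K L : Type*} [Field K] [Field L] [Algebra K L]
    [FiniteDimensional K L] [IsGalois K L]
    (n : ℕ) (σ : Fin n ≃ (L ≃ₐ[K] L)) (x : Module.Basis (Fin n) K L) :
    algebraMap K L (Algebra.discr K x) = (Matrix.of fun i j : Fin n => σ j (x i)).det ^ 2 := by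
  rw [Algebra.discr_def, RingHom.map_det, RingHom.mapMatrix_apply]
  have hT : ∀ A : Matrix (Fin n) (Fin n) L, A.det ^ 2 = (A * A.transpose).det := fun A => by
    rw [Matrix.det_mul, Matrix.det_transpose, pow_two]
  rw [hT]
  congr 1
  ext i j
  simp only [Matrix.map_apply, Algebra.traceMatrix_apply, Algebra.traceForm_apply,
    trace_eq_sum_automorphisms, Matrix.mul_apply, Matrix.transpose_apply, Matrix.of_apply, map_mul]
  exact (Equiv.sum_comp σ (fun s => s (x i) * s (x j))).symm

theorem det_act_aux {K L : Type*} [Field K] [Field L] [Algebra K L]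
    [Fintype (L ≃ₐ[K] L)] [DecidableEq (L ≃ₐ[K] L)]
    (n : ℕ) (σ : Fin n ≃ (L ≃ₐ[K] L)) (x : Fin n → L) (g : L ≃ₐ[K] L) :
    g (Matrix.of fun i j : Fin n => σ j (x i)).det =
      (Equiv.Perm.sign (Equiv.mulLeft g) : ℤ) * (Matrix.of fun i j : Fin n => σ j (x i)).det := by
  rw [← Equiv.Perm.sign_symm_trans_trans (Equiv.mulLeft g) σ.symm, ← Matrix.det_permute']
  rw [AlgEquiv.map_det]
  congr 1
  ext i j
  simp


/-- Let L/K be a finite Galois extension of degree n with Galois group G, let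
x₁, ..., xₙ be a K-basis of L and B the matrix with (i,j) entry σⱼ(xᵢ). If
char K ≠ 2 and G has a cyclic Sylow 2-subgroup of order at least 2, then
det B = μ·α with μ ∈ K, α² ∈ K, and K(α) the unique quadratic extension of K
contained in L. -/
theorem stmt9 (K L : Type*) [Field K] [Field L] [Algebra K L]
    [FiniteDimensional K L] [IsGalois K L]
    (n : ℕ) (hn : Module.finrank K L = n) (σ : Fin n ≃ (L ≃ₐ[K] L))
    (x : Module.Basis (Fin n) K L)
    (hchar : ringChar K ≠ 2)
    (hsylow : ∃ P : Sylow 2 (L ≃ₐ[K] L), IsCyclic P ∧ 2 ≤ Nat.card P) :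
    ∃ (μ : K) (α : L),
      (Matrix.of fun i j : Fin n => σ j (x i)).det = algebraMap K L μ * α ∧
      α ^ 2 ∈ (algebraMap K L).range ∧
      Module.finrank K (IntermediateField.adjoin K {α}) = 2 ∧
      ∀ F : IntermediateField K L, Module.finrank K F = 2 →
        F = IntermediateField.adjoin K {α} := by
  classical
  obtain ⟨P, hPc, hP2⟩ := hsylow
  have : Fact (Nat.Prime 2) := ⟨Nat.prime_two⟩
  obtain ⟨g, hg⟩ := hPc.exists_generator
  have hzp : Subgroup.zpowers (g : L ≃ₐ[K] L) = (P : Subgroup (L ≃ₐ[K] L)) := by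
    apply le_antisymm
    · rw [Subgroup.zpowers_le]; exact g.2
    · intro y hy
      obtain ⟨k, hk⟩ := hg ⟨y, hy⟩
      exact ⟨k, by simpa using congrArg Subtype.val hk⟩
  have hord : orderOf (g : L ≃ₐ[K] L) = Nat.card P := by
    rw [← Nat.card_zpowers, hzp]
  have hq : Odd (P : Subgroup (L ≃ₐ[K] L)).index := by
    rw [← Nat.not_even_iff_odd, even_iff_two_dvd]
    exact P.not_dvd_index
  have hcardG : Fintype.card (L ≃ₐ[K] L) = Nat.card P * (P : Subgroup (L ≃ₐ[K] L)).index := by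
    rw [← Nat.card_eq_fintype_card]
    exact (Subgroup.card_mul_index _).symm
  have h2P : 2 ∣ Nat.card P := by
    obtain ⟨k, hk⟩ := IsPGroup.iff_card.mp P.isPGroup'
    have hk' : Nat.card P = 2 ^ k := hk
    rw [hk'] at hP2 ⊢
    exact dvd_pow_self 2 (by rintro rfl; simp at hP2)
  have hsign := sign_odd_aux (g : L ≃ₐ[K] L) _ _ hord h2P hq hcardG
  have hact := det_act_aux n σ x (g : L ≃ₐ[K] L)
  have hsq := det_sq_aux n σ x
  have hdisc := Algebra.discr_not_zero_of_basis K x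
  rw [hsign] at hact
  generalize (Matrix.of fun i j : Fin n => σ j (x i)).det = α at hact hsq ⊢
  have hact : (g : L ≃ₐ[K] L) α = -α := by simpa using hact
  have hα0 : α ≠ 0 := by
    rintro rfl
    apply hdisc
    simpa using hsq
  have h2K : (2 : K) ≠ 0 := Ring.two_ne_zero hchar
  have h2L : (2 : L) ≠ 0 := by
    have := (map_ne_zero (algebraMap K L)).mpr h2K
    rwa [map_ofNat] at this
  have hαsq : α ^ 2 ∈ (algebraMap K L).range := ⟨_, hsq⟩
  have hαK : α ∉ (algebraMap K L).range := by
    rintro ⟨a, rfl⟩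
    rw [AlgEquiv.commutes] at hact
    apply hα0
    have : 2 * algebraMap K L a = 0 := by linear_combination hact
    exact (mul_eq_zero.mp this).resolve_left h2L
  have hfr : Module.finrank K (IntermediateField.adjoin K {α}) = 2 := by
    have h1 := deg_le_two_aux α hαsq
    have h2 : Module.finrank K (IntermediateField.adjoin K {α}) ≠ 1 :=
      fun h => hαK (mem_range_of_finrank_one α h)
    have h3 : 0 < Module.finrank K (IntermediateField.adjoin K {α}) := Module.finrank_pos
    omega
  -- odd degree fixed field
  have hodd : Odd (Module.finrank K
      (IntermediateField.fixedField (P : Subgroup (L ≃ₐ[K] L)))) := by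
    rw [IntermediateField.finrank_eq_fixingSubgroup_index,
      IntermediateField.fixingSubgroup_fixedField]
    exact hq
  have hkey : ∀ γ : L, γ ^ 2 ∈ (algebraMap K L).range → (g : L ≃ₐ[K] L) γ = γ →
      γ ∈ (algebraMap K L).range := by
    intro γ h1 h2
    refine mem_of_odd_aux _ hodd γ h1 ?_
    have : Subgroup.zpowers (g : L ≃ₐ[K] L) ≤ MulAction.stabilizer (L ≃ₐ[K] L) γ := by
      rw [Subgroup.zpowers_le]; exact h2
    rw [IntermediateField.mem_fixedField_iff]
    intro f hf
    rw [← hzp] at hf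
    exact this hf
  refine ⟨1, α, by simp, hαsq, hfr, ?_⟩
  intro F hF
  refine IntermediateField.eq_of_le_of_finrank_eq ?_ (by rw [hF, hfr])
  have hKmem : ∀ z ∈ (algebraMap K L).range, z ∈ IntermediateField.adjoin K {α} := by
    rintro _ ⟨a, rfl⟩
    exact IntermediateField.algebraMap_mem _ a
  have hαmem : α ∈ IntermediateField.adjoin K {α} := IntermediateField.mem_adjoin_simple_self K α
  intro y hy
  rcases quad_aux F hF y hy with h | ⟨b, hb⟩
  · exact hKmem y h
  · have hβ : 2 * y + algebraMap K L b ∈ IntermediateField.adjoin K {α} := by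
      generalize 2 * y + algebraMap K L b = β at hb
      have hgb : (g : L ≃ₐ[K] L) β = β ∨ (g : L ≃ₐ[K] L) β = -β := by
        rw [← sq_eq_sq_iff_eq_or_eq_neg, ← map_pow]
        obtain ⟨c, hc⟩ := hb
        rw [← hc, AlgEquiv.commutes]
      rcases hgb with h | h
      · exact hKmem _ (hkey β hb h)
      · have := hkey (α * β) (by rw [mul_pow]; exact mul_mem hαsq hb)
          (by rw [map_mul, hact, h]; ring)
        have h3 := div_mem (hKmem _ this) hαmem
        rwa [mul_div_cancel_left₀ _ hα0] at h3
    have h4 := div_mem (sub_mem hβ (IntermediateField.algebraMap_mem _ b))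
      (hKmem 2 ⟨2, map_ofNat _ 2⟩)
    rwa [add_sub_cancel_right, mul_div_cancel_left₀ _ h2L] at h4
end

section
/- Let L/K be a finite Galois field extension of degree n with Galois group G = {σ₁, ..., σₙ}, let H₀ = ker(Tr_{L/K}) be the trace-zero hyperplane, let b₂, ..., bₙ be a K-basis of H₀, and for x ∈ L let E(x) be the n × n matrix whose first row is (σ₁(x), ..., σₙ(x)) and whose i-th row (2 ≤ i ≤ n) is (σ₁(bᵢ), ..., σₙ(bᵢ)). Let E₁ be the (n−1) × (n−1) matrix with (i,j) entry σⱼ(bᵢ) for 2 ≤ i, j ≤ n. Then det E(x) = (det E₁) · Tr_{L/K}(x) for all x ∈ L. -/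
/-- Let L/K be a Galois extension of degree n with Galois group {σ₁, ..., σₙ},
let b₂, ..., bₙ be a K-basis of the trace-zero hyperplane H₀ = ker Tr, and let
E(x) be the n × n matrix whose first row is (σⱼ(x))ⱼ and whose later rows are
(σⱼ(bᵢ))ⱼ. Let E₁ be the (n-1) × (n-1) matrix with entries σⱼ(bᵢ), 2 ≤ i,j ≤ n.
Then det E(x) = det E₁ · Tr_{L/K}(x) for all x ∈ L.
(Here the degree is n + 1 and the bᵢ are indexed by Fin n.) -/
theorem stmt10 (K L : Type*) [Field K] [Field L] [Algebra K L]
    [FiniteDimensional K L] [IsGalois K L]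
    (n : ℕ) (hn : Module.finrank K L = n + 1)
    (σ : Fin (n + 1) ≃ (L ≃ₐ[K] L)) (b : Fin n → L)
    (hb_ind : LinearIndependent K b)
    (hb_span : Submodule.span K (Set.range b) = LinearMap.ker (Algebra.trace K L))
    (x : L) :
    (Matrix.of fun i j : Fin (n + 1) =>
        Fin.cases (motive := fun _ => L) (σ j x) (fun i' => σ j (b i')) i).det =
      (Matrix.of fun i j : Fin n => σ j.succ (b i)).det *
        algebraMap K L (Algebra.trace K L x) := by
  have htr : ∀ y : L, ∑ j, σ j y = algebraMap K L (Algebra.trace K L y) := by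
    intro y
    rw [trace_eq_sum_automorphisms]
    exact Equiv.sum_comp σ (fun g => g y)
  have hb0 : ∀ i, Algebra.trace K L (b i) = 0 := by
    intro i
    have h : b i ∈ LinearMap.ker (Algebra.trace K L) := by
      rw [← hb_span]
      exact Submodule.subset_span ⟨i, rfl⟩
    exact h
  set A : Matrix (Fin (n + 1)) (Fin (n + 1)) L := Matrix.of fun i j : Fin (n + 1) =>
        Fin.cases (motive := fun _ => L) (σ j x) (fun i' => σ j (b i')) i with hA
  have h1 := Matrix.det_updateCol_sum A 0 (fun _ => (1 : L))
  simp only [one_smul] at h1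
  rw [← h1, Matrix.det_succ_column_zero, Fin.sum_univ_succ, Finset.sum_eq_zero]
  · have h2 : (Matrix.submatrix (A.updateCol 0 fun k => ∑ i, A k i) (Fin.succAbove 0) Fin.succ)
        = Matrix.of fun i j : Fin n => σ j.succ (b i) := by
      ext i j
      simp [hA, Matrix.updateCol_apply]
    rw [h2]
    simp [hA, htr, mul_comm]
  · intro i _
    simp [hA, htr, hb0]
end

section
/- Let L/K be a finite Galois field extension of degree n with Galois group G = {σ₁, ..., σₙ}, let H₀ = ker(Tr_{L/K}), let b₂, ..., bₙ be a K-basis of H₀, and let b₁ ∈ L with b₁ ∉ H₀. Then the K-linear map θ : L → L defined by θ(x) = det E(x), where E(x) is the n × n matrix with first row (σ₁(x), ..., σₙ(x)) and i-th row (σ₁(bᵢ), ..., σₙ(bᵢ)) for 2 ≤ i ≤ n, is a nonzero endomorphism of rank one whose kernel is exactly H₀. -/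
/-- With b₂, ..., bₙ a K-basis of H₀ = ker Tr and b₁ ∉ H₀, the K-linear map
θ : L → L given by θ(x) = det E(x), where E(x) is the n × n matrix with first
row (σⱼ(x))ⱼ and later rows (σⱼ(bᵢ))ⱼ, is a nonzero rank-one endomorphism whose
kernel is exactly H₀. (Here the degree is n + 1 and the bᵢ are indexed by Fin n.) -/
theorem stmt11 (K L : Type*) [Field K] [Field L] [Algebra K L]
    [FiniteDimensional K L] [IsGalois K L]
    (n : ℕ) (hn : Module.finrank K L = n + 1)
    (σ : Fin (n + 1) ≃ (L ≃ₐ[K] L)) (b : Fin n → L)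
    (hb_ind : LinearIndependent K b)
    (hb_span : Submodule.span K (Set.range b) = LinearMap.ker (Algebra.trace K L))
    (b₁ : L) (hb₁ : b₁ ∉ LinearMap.ker (Algebra.trace K L)) :
    ∃ θ : L →ₗ[K] L,
      (∀ x : L, θ x =
        (Matrix.of fun i j : Fin (n + 1) =>
          Fin.cases (motive := fun _ => L) (σ j x) (fun i' => σ j (b i')) i).det) ∧
      θ ≠ 0 ∧
      Module.finrank K (LinearMap.range θ) = 1 ∧
      LinearMap.ker θ = LinearMap.ker (Algebra.trace K L) := by
  classical
  let A : L →ₗ[K] (Fin (n + 1) → L) := LinearMap.pi fun j => (σ j).toLinearMap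
  let D₀ : (Fin (n + 1) → L) [⋀^Fin (n + 1)]→ₗ[K] L :=
    { MultilinearMap.restrictScalars K
        (Matrix.detRowAlternating (n := Fin (n + 1)) (R := L)).toMultilinearMap with
      map_eq_zero_of_eq' := fun v i j h hij =>
        (Matrix.detRowAlternating (n := Fin (n + 1)) (R := L)).map_eq_zero_of_eq v h hij }
  let D : L [⋀^Fin (n + 1)]→ₗ[K] L := D₀.compLinearMap A
  have hD : ∀ v : Fin (n + 1) → L, D v = (Matrix.of fun i j => σ j (v i)).det := fun v => rfl
  let θ : L →ₗ[K] L := D.toMultilinearMap.toLinearMap (Fin.cons 0 b) 0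
  have hθ : ∀ x, θ x = D (Fin.cons x b) := by
    intro x
    change D (Function.update (Fin.cons 0 b) 0 x) = _
    rw [Fin.update_cons_zero]
  have hzero : ∀ x, θ x = 0 ↔ x ∈ Submodule.span K (Set.range b) := by
    intro x
    rw [hθ]
    constructor
    · intro h
      by_contra hx
      have hli : LinearIndependent K (Fin.cons x b : Fin (n + 1) → L) :=
        linearIndependent_finCons.2 ⟨hb_ind, hx⟩
      let B := basisOfLinearIndependentOfCardEqFinrank hli (by simp [hn])
      have hB : (B : Fin (n + 1) → L) = Fin.cons x b :=
        coe_basisOfLinearIndependentOfCardEqFinrank hli _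
      have h1 := Algebra.discr_not_zero_of_basis K B
      apply h1
      apply (algebraMap K L).injective
      have h3 : (algebraMap K L) (Algebra.discr K B) = (D B) ^ 2 := by
        rw [Algebra.discr_def, RingHom.map_det, hD]
        have : (algebraMap K L).mapMatrix (Algebra.traceMatrix K B) =
            (Matrix.of fun i j => σ j (B i)) * (Matrix.of fun i j => σ j (B i)).transpose := by
          ext i j
          simp only [RingHom.mapMatrix_apply, Matrix.map_apply, Algebra.traceMatrix_apply,
            Algebra.traceForm_apply, trace_eq_sum_automorphisms, Matrix.mul_apply,
            Matrix.transpose_apply, Matrix.of_apply, map_mul]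
          exact (σ.sum_comp fun g => g (B i) * g (B j)).symm
        rw [this, Matrix.det_mul, Matrix.det_transpose, pow_two]
      rw [h3, hB, h]
      simp
    · intro hx
      apply D.map_linearDependent
      intro h
      exact (linearIndependent_finCons.1 h).2 hx
  have hker : LinearMap.ker θ = LinearMap.ker (Algebra.trace K L) := by
    rw [← hb_span]
    ext x
    rw [LinearMap.mem_ker, hzero]
  refine ⟨θ, ?_, ?_, ?_, hker⟩
  · intro x
    rw [hθ, hD]
    congr 1
    ext i j
    refine Fin.cases ?_ (fun i => ?_) i <;> simp
  · intro h
    apply hb₁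
    rw [← hker, h]
    simp
  · have h1 := LinearMap.finrank_range_add_finrank_ker θ
    rw [hker, ← hb_span, finrank_span_eq_card hb_ind, Fintype.card_fin, hn] at h1
    omega
end

section
/- Let L/K be a finite Galois field extension of degree n with Galois group G = {σ₁, ..., σₙ}, let H₀ = ker(Tr_{L/K}), and let b₂, ..., bₙ be a K-basis of H₀. Then the (n−1) × (n−1) matrix E₁ whose (i,j) entry is σⱼ(bᵢ), for 2 ≤ i, j ≤ n, is invertible. -/
/-- With b₂, ..., bₙ a K-basis of H₀ = ker Tr, the (n-1) × (n-1) matrix E₁ with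
(i,j) entry σⱼ(bᵢ), 2 ≤ i,j ≤ n, is invertible. (Here the degree is n + 1 and
the bᵢ are indexed by Fin n.) -/
theorem stmt12 (K L : Type*) [Field K] [Field L] [Algebra K L]
    [FiniteDimensional K L] [IsGalois K L]
    (n : ℕ) (hn : Module.finrank K L = n + 1)
    (σ : Fin (n + 1) ≃ (L ≃ₐ[K] L)) (b : Fin n → L)
    (hb_ind : LinearIndependent K b)
    (hb_span : Submodule.span K (Set.range b) = LinearMap.ker (Algebra.trace K L)) :
    IsUnit (Matrix.of fun i j : Fin n => σ j.succ (b i)) := by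
  rw [← Matrix.mulVec_injective_iff_isUnit]
  refine (injective_iff_map_eq_zero (Matrix.of fun i j : Fin n => σ j.succ (b i)).mulVecLin).2 ?_
  intro v hv
  have hv' : ∀ i, ∑ j, v j * σ j.succ (b i) = 0 := by
    intro i
    have h := congrFun hv i
    simpa [Matrix.mulVec, dotProduct, mul_comm] using h
  let φ : L →ₗ[K] L := ∑ j, (v j) • (σ j.succ).toLinearMap
  have hφ : ∀ x, φ x = ∑ j, v j * σ j.succ x := by
    intro x
    simp [φ]
  have hker : LinearMap.ker (Algebra.trace K L) ≤ LinearMap.ker φ := by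
    rw [← hb_span, Submodule.span_le]
    rintro _ ⟨i, rfl⟩
    simp only [SetLike.mem_coe, LinearMap.mem_ker]
    rw [hφ, hv']
  obtain ⟨x0, hx0⟩ := Algebra.trace_surjective K L 1
  have key : ∀ x, φ x = φ x0 * ∑ g, σ g x := by
    intro x
    have h1 : x - Algebra.trace K L x • x0 ∈ LinearMap.ker φ := by
      apply hker
      simp [hx0]
    rw [LinearMap.mem_ker, map_sub, map_smul, sub_eq_zero] at h1
    rw [h1, Algebra.smul_def, trace_eq_sum_automorphisms, mul_comm, ← Equiv.sum_comp σ]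
  have hind : LinearIndependent L (fun j : Fin (n + 1) => ((σ j : L →* L) : L → L)) := by
    refine (linearIndependent_monoidHom L L).comp (fun j => (σ j : L →* L)) ?_
    intro i j hij
    apply σ.injective
    ext x
    exact DFunLike.congr_fun hij x
  rw [Fintype.linearIndependent_iff] at hind
  have h0 := hind (Fin.cons (-φ x0) (fun j => v j - φ x0)) (by
    ext x
    have h := key x
    rw [hφ x, Fin.sum_univ_succ] at h
    simp [Fin.sum_univ_succ, sub_mul, Finset.sum_sub_distrib, ← Finset.mul_sum]
    linear_combination h)
  have hc : φ x0 = 0 := by simpa using h0 0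
  ext j
  simpa [hc] using h0 j.succ
end

section
/- Let L/K be a finite Galois field extension of degree n with Galois group G = {σ₁, ..., σₙ}, let H₀ = ker(Tr_{L/K}), let b₂, ..., bₙ be a K-basis of H₀, and let E₁ be the (n−1) × (n−1) matrix with (i,j) entry σⱼ(bᵢ) for 2 ≤ i, j ≤ n. If K has characteristic 2, or if the Sylow 2-subgroup of G is not cyclic, then det E₁ ∈ K. -/
open Matrix in
lemma aux_det {L : Type*} [Field L] {n : ℕ} (x : Fin (n+1) → L) (B : Matrix (Fin n) (Fin (n+1)) L)
    (hB : ∀ i, ∑ j, B i j = 0) :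
    (Matrix.of (Fin.cons x B : Fin (n+1) → Fin (n+1) → L)).det
      = (∑ j, x j) * (B.submatrix id Fin.succ).det := by
  set A : Matrix (Fin (n+1)) (Fin (n+1)) L :=
    Matrix.of (Fin.cons x B : Fin (n+1) → Fin (n+1) → L) with hA
  have h1 := Matrix.det_updateCol_sum A 0 (fun _ => (1 : L))
  simp only [one_smul] at h1
  rw [← h1, Matrix.det_succ_column_zero, Fin.sum_univ_succ, Finset.sum_eq_zero]
  · simp only [Fin.val_zero, pow_zero, one_mul, add_zero, Matrix.updateCol_self]
    congr 1
  · intro i _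
    have : ∑ j, A i.succ j = 0 := hB i
    simp [this]

open Matrix in
lemma aux_perm {L : Type*} [Field L] {n : ℕ} (B : Matrix (Fin n) (Fin (n+1)) L)
    (hB : ∀ i, ∑ j, B i j = 0) (π : Equiv.Perm (Fin (n+1))) :
    (Matrix.of fun i (j : Fin n) => B i (π j.succ)).det
      = (Equiv.Perm.sign π : L) * (B.submatrix id Fin.succ).det := by
  have h1 := aux_det (Pi.single 0 1) (B.submatrix id π) (fun i => by
    simpa using (Equiv.sum_comp π (B i)).trans (hB i))
  have h2 := aux_det ((Pi.single 0 1 : Fin (n+1) → L) ∘ π.symm) B hB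
  have h3 : (∑ j, ((Pi.single 0 1 : Fin (n+1) → L) ∘ π.symm) j) = 1 := by
    have := Equiv.sum_comp π.symm (Pi.single 0 1 : Fin (n+1) → L)
    simpa using this
  rw [h3, one_mul] at h2
  have h4 : (∑ j, (Pi.single 0 1 : Fin (n+1) → L) j) = 1 := by simp
  rw [h4, one_mul] at h1
  rw [← h2, ← Matrix.det_permute']
  refine Eq.trans h1.symm ?_
  congr 1
  ext i j
  refine Fin.cases ?_ (fun i => ?_) i
  · change (Pi.single 0 1 : Fin (n+1) → L) j = (Pi.single 0 1 : Fin (n+1) → L) (π.symm (π j))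
    rw [Equiv.symm_apply_apply]
  · rfl

lemma aux_sign {G : Type*} [Group G] [Fintype G] [DecidableEq G]
    (h : ∀ P : Sylow 2 G, ¬ IsCyclic P) (τ : G) : Equiv.Perm.sign (Equiv.mulLeft τ) = 1 := by
  classical
  set H := Subgroup.zpowers τ with hH
  obtain ⟨T, hT, -⟩ := H.exists_isComplement_right 1
  have hτ : τ ∈ H := Subgroup.mem_zpowers τ
  have heven : Even H.index := by
    by_contra hodd
    rw [even_iff_two_dvd] at hodd
    obtain ⟨Q⟩ : Nonempty (Sylow 2 H) := inferInstance
    have hc : Nat.card ((Q : Subgroup H).map H.subtype) = 2 ^ (Nat.card G).factorization 2 := by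
      rw [Subgroup.card_subtype, Q.card_eq_multiplicity, ← H.card_mul_index,
        Nat.factorization_mul Nat.card_pos.ne' H.index_ne_zero_of_finite, Finsupp.add_apply,
        Nat.factorization_eq_zero_of_not_dvd hodd, add_zero]
    have hcyc : IsCyclic ((Q : Subgroup H).map H.subtype) := by
      have : IsCyclic H := inferInstance
      exact isCyclic_of_surjective ((Q : Subgroup H).equivMapOfInjective H.subtype
        H.subtype_injective) (MulEquiv.surjective _)
    exact h (Sylow.ofCard _ hc) hcyc
  have key := Equiv.Perm.sign_eq_sign_of_equiv (Equiv.mulLeft τ)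
    (Equiv.prodCongrLeft (fun _ : T => Equiv.mulLeft (⟨τ, hτ⟩ : H))) hT.equiv (by
      intro x
      have := hT.equiv_mul_left ⟨τ, hτ⟩ x
      exact this)
  rw [key, Equiv.Perm.sign_prodCongrLeft, Finset.prod_const, Finset.card_univ,
    ← Nat.card_eq_fintype_card, hT.card_right]
  obtain ⟨k, hk⟩ := heven
  rw [hk, pow_add, ← mul_pow, Int.units_mul_self, one_pow]

/-- With b₂, ..., bₙ a K-basis of H₀ = ker Tr and E₁ the (n-1) × (n-1) matrix
with (i,j) entry σⱼ(bᵢ): if K has characteristic 2, or the Sylow 2-subgroup of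
G = Gal(L/K) is not cyclic, then det E₁ lies in (the image of) K.
(Here the degree is n + 1 and the bᵢ are indexed by Fin n.) -/
theorem stmt13 (K L : Type*) [Field K] [Field L] [Algebra K L]
    [FiniteDimensional K L] [IsGalois K L]
    (n : ℕ) (hn : Module.finrank K L = n + 1)
    (σ : Fin (n + 1) ≃ (L ≃ₐ[K] L)) (b : Fin n → L)
    (hb_ind : LinearIndependent K b)
    (hb_span : Submodule.span K (Set.range b) = LinearMap.ker (Algebra.trace K L))
    (h : ringChar K = 2 ∨ ∀ P : Sylow 2 (L ≃ₐ[K] L), ¬ IsCyclic P) :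
    (Matrix.of fun i j : Fin n => σ j.succ (b i)).det ∈ (algebraMap K L).range := by
  classical
  have hB : ∀ i, ∑ j, (Matrix.of fun i (j : Fin (n+1)) => σ j (b i)) i j = 0 := by
    intro i
    have hi : b i ∈ LinearMap.ker (Algebra.trace K L) := by
      rw [← hb_span]; exact Submodule.subset_span ⟨i, rfl⟩
    rw [LinearMap.mem_ker] at hi
    have h1 := trace_eq_sum_automorphisms (K := K) (b i)
    rw [hi, map_zero] at h1
    rw [h1]
    exact Equiv.sum_comp σ (fun g => g (b i))
  suffices hs : ∀ τ : L ≃ₐ[K] L, τ (Matrix.of fun i j : Fin n => σ j.succ (b i)).det =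
      (Matrix.of fun i j : Fin n => σ j.succ (b i)).det by
    exact (IsGalois.mem_range_algebraMap_iff_fixed _).2 hs
  intro τ
  set π : Equiv.Perm (Fin (n+1)) := (σ.trans (Equiv.mulLeft τ)).trans σ.symm with hπ
  have hp := aux_perm _ hB π
  have hsign : ((Equiv.Perm.sign π : ℤ) : L) = 1 := by
    rcases h with h | h
    · have : CharP K 2 := ringChar.of_eq h
      have : CharP L 2 := charP_of_injective_algebraMap (algebraMap K L).injective 2
      rcases Int.units_eq_one_or (Equiv.Perm.sign π) with h | h <;> simp [h, CharTwo.neg_eq]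
    · have : Equiv.Perm.sign π = 1 := by
        rw [← aux_sign h τ]
        exact Equiv.Perm.sign_symm_trans_trans (Equiv.mulLeft τ) σ.symm
      simp [this]
  rw [hsign, one_mul] at hp
  refine Eq.trans ?_ (hp.trans rfl)
  rw [AlgEquiv.map_det]
  congr 1
  ext i j
  simp [hπ]
end

section
/- Let L/K be a finite Galois field extension of degree n with Galois group G = {σ₁, ..., σₙ}, let H₀ = ker(Tr_{L/K}) with K-basis b₂, ..., bₙ, let a ∈ L be nonzero, set cᵢ = a^{-1} bᵢ for 2 ≤ i ≤ n (so c₂, ..., cₙ is a basis of the hyperplane H = {x ∈ L : Tr_{L/K}(ax) = 0}), and for x ∈ L let D(x) be the n × n matrix whose first row is (σ₁(x), ..., σₙ(x)) and whose i-th row (2 ≤ i ≤ n) is (σ₁(cᵢ), ..., σₙ(cᵢ)). Let E₁ be the (n−1) × (n−1) matrix with (i,j) entry σⱼ(bᵢ) for 2 ≤ i, j ≤ n. Then det D(x) = N_{L/K}(a^{-1}) · (det E₁) · Tr_{L/K}(ax) for all x ∈ L. -/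
/-- With b₂, ..., bₙ a K-basis of H₀ = ker Tr, a ∈ L nonzero, cᵢ = a⁻¹ bᵢ, and
D(x) the n × n matrix with first row (σⱼ(x))ⱼ and later rows (σⱼ(cᵢ))ⱼ, and E₁
the (n-1) × (n-1) matrix with entries σⱼ(bᵢ), we have
det D(x) = N_{L/K}(a⁻¹) · det E₁ · Tr_{L/K}(a x) for all x ∈ L.
(Here the degree is n + 1 and the bᵢ are indexed by Fin n.) -/
theorem stmt16 (K L : Type*) [Field K] [Field L] [Algebra K L]
    [FiniteDimensional K L] [IsGalois K L]
    (n : ℕ) (hn : Module.finrank K L = n + 1)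
    (σ : Fin (n + 1) ≃ (L ≃ₐ[K] L)) (b : Fin n → L)
    (hb_ind : LinearIndependent K b)
    (hb_span : Submodule.span K (Set.range b) = LinearMap.ker (Algebra.trace K L))
    (a : L) (ha : a ≠ 0) (c : Fin n → L) (hc : ∀ i, c i = a⁻¹ * b i) (x : L) :
    (Matrix.of fun i j : Fin (n + 1) =>
        Fin.cases (motive := fun _ => L) (σ j x) (fun i' => σ j (c i')) i).det =
      algebraMap K L (Algebra.norm K a⁻¹) *
        (Matrix.of fun i j : Fin n => σ j.succ (b i)).det *
        algebraMap K L (Algebra.trace K L (a * x)) := by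
  classical
  have htr : ∀ y : L, ∑ j, σ j y = algebraMap K L (Algebra.trace K L y) := by
    intro y
    rw [trace_eq_sum_automorphisms]
    exact Equiv.sum_comp σ (fun s : L ≃ₐ[K] L => s y)
  have hnm : ∏ j, σ j a⁻¹ = algebraMap K L (Algebra.norm K a⁻¹) := by
    rw [Algebra.norm_eq_prod_automorphisms]
    exact Equiv.prod_comp σ (fun s : L ≃ₐ[K] L => s a⁻¹)
  have hb0 : ∀ i, Algebra.trace K L (b i) = 0 := by
    intro i
    have h : b i ∈ Submodule.span K (Set.range b) := Submodule.subset_span ⟨i, rfl⟩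
    rw [hb_span] at h
    exact h
  let M : Matrix (Fin (n + 1)) (Fin (n + 1)) L := Matrix.of fun i j =>
        Fin.cases (motive := fun _ => L) (σ j (a * x)) (fun i' => σ j (b i')) i
  have h1 : (Matrix.of fun i j : Fin (n + 1) =>
        Fin.cases (motive := fun _ => L) (σ j x) (fun i' => σ j (c i')) i)
      = Matrix.of fun i j => σ j a⁻¹ * M i j := by
    ext i j
    refine Fin.cases ?_ (fun i' => ?_) i
    · simp only [M, Matrix.of_apply, Fin.cases_zero]
      rw [← map_mul, inv_mul_cancel_left₀ ha]
    · simp only [M, Matrix.of_apply, Fin.cases_succ]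
      rw [← map_mul, hc]
  have h2 : M.det = (Matrix.of fun i j : Fin n => σ j.succ (b i)).det *
        algebraMap K L (Algebra.trace K L (a * x)) := by
    have h := Matrix.det_updateCol_sum M 0 (fun _ => (1 : L))
    rw [one_smul] at h
    rw [← h, Matrix.det_succ_column_zero, Fin.sum_univ_succ, Finset.sum_eq_zero]
    · have e : ((M.updateCol 0 (fun k => ∑ i, (1 : L) • M k i)).submatrix
          (Fin.succAbove 0) Fin.succ) = Matrix.of fun i j : Fin n => σ j.succ (b i) := by
        ext i j
        simp [M, Matrix.updateCol_apply]
      rw [e]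
      simp [M, ← htr, mul_comm]
    · intro i _
      simp [M, htr, hb0]
  rw [h1, Matrix.det_mul_row, hnm, h2, mul_assoc]
end

section
/- Let L/K be a cyclic Galois field extension of degree n with Gal(L/K) = ⟨σ⟩, let k be an integer with 1 ≤ k ≤ n, and let b₁, ..., b_k ∈ L. Then b₁, ..., b_k are linearly dependent over K if and only if det S = 0, where S is the k × k matrix with (i,j) entry σ^{i-1}(b_j) for 1 ≤ i, j ≤ k. -/
theorem stmt17_aux (K L : Type*) [Field K] [Field L] [Algebra K L]
    [FiniteDimensional K L] [IsGalois K L]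
    (σ : L ≃ₐ[K] L) (hσ : ∀ τ : L ≃ₐ[K] L, τ ∈ Subgroup.zpowers σ)
    (k : ℕ) : ∀ (b : Fin k → L), LinearIndependent K b → ∀ c : Fin k → L,
      (∀ i : ℕ, i < k → ∑ j, (σ ^ i) (b j) * c j = 0) → c = 0 := by
  have hfix : ∀ x : L, σ x = x → ∃ y : K, algebraMap K L y = x := by
    intro x hx
    have h1 : ∀ τ : L ≃ₐ[K] L, τ x = x := by
      intro τ
      have h2 : Subgroup.zpowers σ ≤ MulAction.stabilizer (L ≃ₐ[K] L) x := by
        rw [Subgroup.zpowers_le]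
        exact hx
      exact h2 (hσ τ)
    exact (IsGalois.mem_range_algebraMap_iff_fixed x).2 h1
  induction k with
  | zero => intro b hb c hc; exact Subsingleton.elim _ _
  | succ k ih =>
    intro b hb c hc
    have hb' : LinearIndependent K (fun j : Fin k => b j.castSucc) :=
      hb.comp _ (Fin.castSucc_injective k)
    have key := ih _ hb'
    by_cases hl : c (Fin.last k) = 0
    · have h0 := key (fun j => c j.castSucc) (by
        intro i hi
        have := hc i (by omega)
        rw [Fin.sum_univ_castSucc, hl] at this
        simpa using this)
      funext j
      refine Fin.lastCases hl (fun j => ?_) j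
      exact congrFun h0 j
    · exfalso
      set d : Fin (k+1) → L := fun j => c j / c (Fin.last k) with hd
      have hdl : d (Fin.last k) = 1 := div_self hl
      have hdc : ∀ i : ℕ, i < k + 1 → ∑ j, (σ ^ i) (b j) * d j = 0 := by
        intro i hi
        have := hc i hi
        simp only [hd, ← mul_div_assoc, ← Finset.sum_div, this, zero_div]
      have h0 := key (fun j => d j.castSucc - σ.symm (d j.castSucc)) (by
        intro i hi
        have h1 := hdc i (by omega)
        have h2 := congrArg σ.symm (hdc (i+1) (by omega))
        have h3 : ∀ x, σ.symm ((σ ^ (i+1)) x) = (σ ^ i) x := by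
          intro x
          rw [pow_succ']
          exact σ.symm_apply_apply _
        simp only [map_sum, map_mul, map_zero, h3] at h2
        rw [Fin.sum_univ_castSucc, hdl] at h1 h2
        rw [map_one] at h2
        simp only [mul_sub, Finset.sum_sub_distrib]
        linear_combination h1 - h2)
      have hf : ∀ j, σ (d j) = d j := by
        intro j
        refine Fin.lastCases (by rw [hdl, map_one]) (fun j => ?_) j
        have := sub_eq_zero.1 (congrFun h0 j)
        conv_lhs => rw [this]
        exact σ.apply_symm_apply _
      choose g hg using fun j => hfix _ (hf j)
      have h4 := Fintype.linearIndependent_iff.1 hb g (by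
        have := hdc 0 (by omega)
        simp only [Algebra.smul_def, hg]
        simpa [mul_comm] using this) (Fin.last k)
      have h5 := hg (Fin.last k)
      rw [h4, hdl, map_zero] at h5
      exact zero_ne_one h5


/-- Let L/K be a cyclic Galois extension of degree n with Gal(L/K) = ⟨σ⟩, let
1 ≤ k ≤ n and b₁, ..., b_k ∈ L. Then b₁, ..., b_k are linearly dependent over K
iff det S = 0, where S is the k × k matrix with (i,j) entry σ^(i-1)(bⱼ). -/
theorem stmt17 (K L : Type*) [Field K] [Field L] [Algebra K L]
    [FiniteDimensional K L] [IsGalois K L]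
    (n : ℕ) (hn : Module.finrank K L = n)
    (σ : L ≃ₐ[K] L) (hσ : ∀ τ : L ≃ₐ[K] L, τ ∈ Subgroup.zpowers σ)
    (k : ℕ) (hk1 : 1 ≤ k) (hkn : k ≤ n) (b : Fin k → L) :
    ¬ LinearIndependent K b ↔
      (Matrix.of fun i j : Fin k => (σ ^ (i : ℕ)) (b j)).det = 0 := by
  rw [← Matrix.exists_mulVec_eq_zero_iff]
  constructor
  · intro h
    rw [Fintype.linearIndependent_iff] at h
    push Not at h
    obtain ⟨g, hg, i, hi⟩ := h
    refine ⟨fun j => algebraMap K L (g j), fun h => hi ?_, ?_⟩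
    · simpa using congrFun h i
    · funext i
      have := congrArg (σ ^ (i : ℕ)) hg
      simp only [Algebra.smul_def, map_sum, map_mul, map_zero, AlgEquiv.commutes] at this
      simpa [Matrix.mulVec, dotProduct, mul_comm] using this
  · rintro ⟨v, hv, h⟩ hb
    refine hv (stmt17_aux K L σ hσ k b hb v fun i hi => ?_)
    exact congrFun h ⟨i, hi⟩
end

section
/- Let L/K be a cyclic Galois field extension of degree n with Gal(L/K) = ⟨σ⟩, let k be an integer with 1 ≤ k ≤ n, and let b₁, ..., b_k ∈ L be linearly independent over K with b₁ ≠ 0. Set x_j = b_j − (b₁/σ(b₁))·σ(b_j) for 2 ≤ j ≤ k. Then x₂, ..., x_k are linearly independent over K. -/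
/-- Let L/K be a cyclic Galois extension of degree n with Gal(L/K) = ⟨σ⟩, let
1 ≤ k ≤ n and b₁, ..., b_k ∈ L be linearly independent over K (so b₁ ≠ 0).
Setting x_j = b_j − (b₁/σ(b₁))·σ(b_j) for 2 ≤ j ≤ k, the elements x₂, ..., x_k
are linearly independent over K. (Here k = m + 1, the bᵢ are indexed by
Fin (m+1) and the xⱼ by Fin m.) -/
theorem stmt18 (K L : Type*) [Field K] [Field L] [Algebra K L]
    [FiniteDimensional K L] [IsGalois K L]
    (n : ℕ) (hn : Module.finrank K L = n)
    (σ : L ≃ₐ[K] L) (hσ : ∀ τ : L ≃ₐ[K] L, τ ∈ Subgroup.zpowers σ)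
    (m : ℕ) (hm : m + 1 ≤ n) (b : Fin (m + 1) → L)
    (hb : LinearIndependent K b) (hb0 : b 0 ≠ 0) :
    LinearIndependent K
      (fun j : Fin m => b j.succ - (b 0 / σ (b 0)) * σ (b j.succ)) := by
  rw [Fintype.linearIndependent_iff] at hb ⊢
  intro c hc
  have hs0 : σ (b 0) ≠ 0 := by simpa using hb0
  set y : L := ∑ j : Fin m, c j • b j.succ with hy
  have hσy : σ y = ∑ j : Fin m, c j • σ (b j.succ) := by
    simp [hy, map_sum, map_smul]
  have h1 : y - (b 0 / σ (b 0)) * σ y = 0 := by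
    rw [hσy, hy, Finset.mul_sum, ← Finset.sum_sub_distrib, ← hc]
    refine Finset.sum_congr rfl fun j _ => ?_
    rw [smul_sub, mul_smul_comm]
  have h2 : σ (y / b 0) = y / b 0 := by
    rw [map_div₀]
    rw [sub_eq_zero] at h1
    field_simp at h1 ⊢
    linear_combination -h1
  have h3 : ∀ τ : L ≃ₐ[K] L, τ (y / b 0) = y / b 0 := by
    intro τ
    have hle : Subgroup.zpowers σ ≤ MulAction.stabilizer (L ≃ₐ[K] L) (y / b 0) := by
      rw [Subgroup.zpowers_le]
      exact h2
    exact hle (hσ τ)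
  obtain ⟨a, ha⟩ := (IsGalois.mem_range_algebraMap_iff_fixed (F := K) (y / b 0)).2 h3
  have h4 : y = a • b 0 := by
    rw [Algebra.smul_def, ha, div_mul_cancel₀ _ hb0]
  have h5 := hb (Fin.cons (-a) c) (by
    rw [Fin.sum_univ_succ]
    simp only [Fin.cons_zero, Fin.cons_succ]
    rw [← hy, h4, neg_smul, neg_add_cancel])
  intro j
  simpa using h5 j.succ
end
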